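/- For every positive root γ ∈ R^+, the length of the reflection s_γ satisfies ℓ(s_γ) ≤ ⟨2ρ, γ^∨⟩ − 1. -/

import Mathlib

open scoped BigOperators

/-- A reduced crystallographic root system with a fixed base `α_1, …, α_n` of simple
roots, bundled with its Weyl group `W`.  A root `γ` is recorded by its integer
coordinate vector in the basis of simple roots (so the `i`-th simple root is
`Pi.single i 1`), and `cor γ` is the coordinate vector of the coroot `γ^∨` in the
basis of simple coroots (hence `cor γ i = ⟨χ_i, γ^∨⟩` for the fundamental weights
`χ_i`).  `A i j = ⟨α_i, α_j^∨⟩` is the Cartan matrix, `σ γ` is the reflection `s_γ`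
and `act` is the action of the Weyl group on the root lattice. -/
structure RootSystemData (n : ℕ) where
  A : Fin n → Fin n → ℤ
  R : Finset (Fin n → ℤ)
  cor : (Fin n → ℤ) → (Fin n → ℤ)
  W : Type
  [grp : Group W]
  σ : (Fin n → ℤ) → W
  act : W → (Fin n → ℤ) → (Fin n → ℤ)
  simple_mem : ∀ i : Fin n, (Pi.single i 1 : Fin n → ℤ) ∈ R
  root_ne_zero : ∀ γ ∈ R, γ ≠ 0
  neg_mem : ∀ γ ∈ R, -γ ∈ R
  pos_or_neg : ∀ γ ∈ R, (∀ i, 0 ≤ γ i) ∨ (∀ i, γ i ≤ 0)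
  reduced : ∀ γ ∈ R, ∀ k : ℤ, k • γ ∈ R → k = 1 ∨ k = -1
  cor_simple : ∀ i : Fin n, cor (Pi.single i 1) = Pi.single i 1
  cor_neg : ∀ γ ∈ R, cor (-γ) = -(cor γ)
  pair_self : ∀ γ ∈ R, (∑ i, ∑ j, γ i * A i j * cor γ j) = 2
  act_one : ∀ x, act 1 x = x
  act_mul : ∀ w w' x, act (w * w') x = act w (act w' x)
  act_refl : ∀ γ ∈ R, ∀ x, act (σ γ) x = x - (∑ i, ∑ j, x i * A i j * cor γ j) • γ
  act_mem : ∀ (w : W), ∀ γ ∈ R, act w γ ∈ R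
  cor_refl : ∀ γ ∈ R, ∀ β ∈ R,
    cor (act (σ γ) β) = cor β - (∑ i, ∑ j, γ i * A i j * cor β j) • cor γ
  refl_sq : ∀ γ ∈ R, σ γ * σ γ = 1
  refl_act : ∀ (w : W), ∀ γ ∈ R, σ (act w γ) = w * σ γ * w⁻¹
  act_faithful : ∀ w w' : W, (∀ γ ∈ R, act w γ = act w' γ) → w = w'
  generated : ∀ w : W, ∃ l : List (Fin n), w = (l.map fun i => σ (Pi.single i 1)).prod

namespace RootSystemData

instance {n : ℕ} (c : RootSystemData n) : Group c.W := c.grp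

/-- the pairing `⟨x, λ⟩` between an element `x` of the root lattice (coordinates in
the basis of simple roots) and an element `λ` of the coroot lattice (coordinates in
the basis of simple coroots) -/
def pair {n : ℕ} (c : RootSystemData n) (x lam : Fin n → ℤ) : ℤ :=
  ∑ i, ∑ j, x i * c.A i j * lam j

/-- the `i`-th simple root -/
def sroot {n : ℕ} (_c : RootSystemData n) (i : Fin n) : Fin n → ℤ := Pi.single i 1

/-- the simple reflection `s_i` -/
def s {n : ℕ} (c : RootSystemData n) (i : Fin n) : c.W := c.σ (c.sroot i)

/-- `s_{α_{t+1}}` for a `0`-based natural number index `t` (`= 1` when out of range) -/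
def sN {n : ℕ} (c : RootSystemData n) (t : ℕ) : c.W := if h : t < n then c.s ⟨t, h⟩ else 1

/-- `⟨2ρ, λ⟩ = Σ_{β ∈ R^+} ⟨β, λ⟩`, where `ρ` is the half-sum of the positive roots -/
def pairTwoRho {n : ℕ} (c : RootSystemData n) (lam : Fin n → ℤ) : ℤ :=
  ∑ β ∈ c.R, if ∀ i, 0 ≤ β i then c.pair β lam else 0

/-- the length of `w ∈ W` with respect to the simple reflections -/
noncomputable def len {n : ℕ} (c : RootSystemData n) (w : c.W) : ℕ :=
  sInf {k | ∃ l : List (Fin n), l.length = k ∧ (l.map c.s).prod = w}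

/-- the parabolic subgroup `W_S` generated by the simple reflections indexed by `S` -/
def Wsub {n : ℕ} (c : RootSystemData n) (S : Finset (Fin n)) : Subgroup c.W :=
  Subgroup.closure (c.s '' ↑S)

/-- `w ∈ W_T^S`: `w ∈ W_T` and `w` has minimal length in the coset `w W_S` -/
def MinRep {n : ℕ} (c : RootSystemData n) (T S : Finset (Fin n)) (w : c.W) : Prop :=
  w ∈ c.Wsub T ∧ ∀ u ∈ c.Wsub S, c.len w ≤ c.len (w * u)

/-- `w` is the longest element of `W_S` -/
def IsLongest {n : ℕ} (c : RootSystemData n) (S : Finset (Fin n)) (w : c.W) : Prop :=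
  w ∈ c.Wsub S ∧ ∀ v ∈ c.Wsub S, c.len v ≤ c.len w

end RootSystemData

/-- the support of `γ` is contained in `S`, i.e. `γ` lies in the span of
`{α_i : i ∈ S}` (for a root `γ`, membership in `R_S`) -/
def suppIn {n : ℕ} (S : Finset (Fin n)) (γ : Fin n → ℤ) : Prop :=
  ∀ i, i ∉ S → γ i = 0

/-- `Δ_j` for `0 ≤ j ≤ r+1`: the index set of the first `j` simple roots for `j ≤ r`,
and all of `Δ` for `j = r+1`.  (Indices of simple roots are `0`-based, so
`α_1, …, α_j` correspond to the indices `0, …, j-1`.) -/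
def deltaSet (n r j : ℕ) : Finset (Fin n) :=
  if j = r + 1 then Finset.univ else Finset.univ.filter fun i => (i : ℕ) < j

namespace RootSystemData

/-- `v 0, …, v r` (standing for `v_1, …, v_{r+1}`) is the decomposition of `w`
associated to `(Δ_P, Υ)`:  each `v_i ∈ W_{Δ_i}^{Δ_{i-1}}` and `w = v_{r+1} v_r ⋯ v_1`. -/
def IsDecomp {n : ℕ} (c : RootSystemData n) (r : ℕ) (w : c.W)
    (v : Fin (r + 1) → c.W) : Prop :=
  (∀ k : Fin (r + 1), c.MinRep (deltaSet n r ((k : ℕ) + 1)) (deltaSet n r (k : ℕ)) (v k)) ∧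
    w = (List.ofFn v).reverse.prod

/-- the first `m` simple roots `α_1, …, α_m` form a path of type `A_m`:
`⟨α_i, α_j^∨⟩ = -1` if `|i-j| = 1` and `⟨α_i, α_j^∨⟩ = 0` if `|i-j| ≥ 2`. -/
def PathA {n : ℕ} (c : RootSystemData n) (m : ℕ) : Prop :=
  ∀ i j : Fin n, (i : ℕ) < m → (j : ℕ) < m →
    (((i : ℕ) + 1 = (j : ℕ) ∨ (j : ℕ) + 1 = (i : ℕ)) → c.A i j = -1) ∧
    ((i : ℕ) + 2 ≤ (j : ℕ) ∨ (j : ℕ) + 2 ≤ (i : ℕ) → c.A i j = 0)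

/-- `u_{[k,m]} = s_k s_{k+1} ⋯ s_m` (`1`-based indices; `u_{[k,m]} = 1` for `k > m`) -/
def uu {n : ℕ} (c : RootSystemData n) (k m : ℕ) : c.W :=
  ((List.range' k (m + 1 - k)).map fun t => c.sN (t - 1)).prod

/-- `u_i^{(m)} = s_{m-i+1} s_{m-i+2} ⋯ s_m` -/
def uElt {n : ℕ} (c : RootSystemData n) (i m : ℕ) : c.W := c.uu (m - i + 1) m

end RootSystemData

/-- strict lexicographic order on `Fin m → ℤ` -/
def lexLT {m : ℕ} (x y : Fin m → ℤ) : Prop :=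
  ∃ j, x j < y j ∧ ∀ k, k < j → x k = y k

/-- lexicographic order on `Fin m → ℤ` -/
def lexLE {m : ℕ} (x y : Fin m → ℤ) : Prop := x = y ∨ lexLT x y

/-- the grading `gr(q_{α_{j+1}^∨}) ∈ ℤ^{r+1}` (for the `0`-based index `j < r`), when
`Δ_P` is of type `A_r`: in `1`-based terms, `gr(q_{α_1^∨}) = 2·e_1` and
`gr(q_{α_j^∨}) = (1-j)·e_{j-1} + (1+j)·e_j` for `2 ≤ j ≤ r`. -/
def grQ (r j : ℕ) : Fin (r + 1) → ℤ := fun k =>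
  (if (k : ℕ) = j then (j : ℤ) + 2 else 0) + (if (k : ℕ) + 1 = j then -(j : ℤ) else 0)

/-- the grading `gr(q_λ)` for `λ ∈ Q_P^∨` (coordinates in simple coroots), extended
additively from the `gr(q_{α_j^∨})`, when `Δ_P` is of type `A_r` -/
def grQlam (n r : ℕ) (lam : Fin n → ℤ) : Fin (r + 1) → ℤ :=
  fun k => ∑ j, lam j * grQ r (j : ℕ) k

/-!
We descend from a positive root `γ` by simple reflections. From
`2 = ⟨γ, γ^∨⟩ = Σ γ_i ⟨α_i, γ^∨⟩` with all `γ_i ≥ 0`, some simple root has `⟨α_i, γ^∨⟩ ≥ 1`.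

* If `γ = α_i`, then `ℓ(s_γ) ≤ 1`, while `⟨2ρ, α_i^∨⟩ = 2`: the reflection `s_i` permutes the
  other positive roots and negates their pairings with `α_i^∨`, so these cancel.
* Otherwise `γ' = s_i γ` is a positive root. Since `s_γ = s_i s_{γ'} s_i`, passing to `γ'` lowers
  the length by at most `2`; since `γ'^∨ = γ^∨ - ⟨α_i, γ^∨⟩ α_i^∨`, it lowers `⟨2ρ, γ^∨⟩` by
  `2 ⟨α_i, γ^∨⟩ ≥ 2`.

There are finitely many roots and `⟨2ρ, γ^∨⟩` drops strictly, so the descent ends at a simple root.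
-/

namespace RootSystemData

variable {n : ℕ} (c : RootSystemData n)

section Pairing

open Matrix

lemma pair_eq_dotProduct_mulVec (x l : Fin n → ℤ) : c.pair x l = x ⬝ᵥ of c.A *ᵥ l := by
  simp [pair, dotProduct, mulVec, Finset.mul_sum, mul_assoc]

lemma pair_sub_left (x y l : Fin n → ℤ) : c.pair (x - y) l = c.pair x l - c.pair y l := by
  simp only [pair_eq_dotProduct_mulVec, sub_dotProduct]

lemma pair_smul_left (k : ℤ) (x l : Fin n → ℤ) : c.pair (k • x) l = k * c.pair x l := by
  simp only [pair_eq_dotProduct_mulVec, smul_dotProduct, smul_eq_mul]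

lemma pair_sub_right (x l m : Fin n → ℤ) : c.pair x (l - m) = c.pair x l - c.pair x m := by
  simp only [pair_eq_dotProduct_mulVec, mulVec_sub, dotProduct_sub]

lemma pair_smul_right (k : ℤ) (x l : Fin n → ℤ) : c.pair x (k • l) = k * c.pair x l := by
  simp only [pair_eq_dotProduct_mulVec, mulVec_smul, dotProduct_smul, smul_eq_mul]

lemma pair_eq_sum_mul_pair_sroot (x l : Fin n → ℤ) :
    c.pair x l = ∑ i, x i * c.pair (c.sroot i) l := by
  simp only [pair_eq_dotProduct_mulVec, sroot, single_one_dotProduct]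
  rfl

end Pairing

lemma sroot_mem (i : Fin n) : c.sroot i ∈ c.R := c.simple_mem i

lemma cor_sroot (i : Fin n) : c.cor (c.sroot i) = c.sroot i := c.cor_simple i

lemma pair_cor_self {γ : Fin n → ℤ} (hγ : γ ∈ c.R) : c.pair γ (c.cor γ) = 2 := c.pair_self γ hγ

lemma pair_sroot_self (i : Fin n) : c.pair (c.sroot i) (c.sroot i) = 2 := by
  simpa only [cor_sroot] using c.pair_cor_self (c.sroot_mem i)

lemma act_σ {γ : Fin n → ℤ} (hγ : γ ∈ c.R) (x : Fin n → ℤ) :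
    c.act (c.σ γ) x = x - c.pair x (c.cor γ) • γ :=
  c.act_refl γ hγ x

lemma cor_act_σ {γ β : Fin n → ℤ} (hγ : γ ∈ c.R) (hβ : β ∈ c.R) :
    c.cor (c.act (c.σ γ) β) = c.cor β - c.pair γ (c.cor β) • c.cor γ :=
  c.cor_refl γ hγ β hβ

lemma act_s (i : Fin n) (x : Fin n → ℤ) :
    c.act (c.s i) x = x - c.pair x (c.sroot i) • c.sroot i := by
  rw [s, c.act_σ (c.sroot_mem i), cor_sroot]

lemma act_s_apply_of_ne {i j : Fin n} (hij : j ≠ i) (x : Fin n → ℤ) :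
    c.act (c.s i) x j = x j := by
  simp [act_s, sroot, hij]

lemma pair_act_s_sroot (i : Fin n) (x : Fin n → ℤ) :
    c.pair (c.act (c.s i) x) (c.sroot i) = -c.pair x (c.sroot i) := by
  rw [act_s, pair_sub_left, pair_smul_left, pair_sroot_self]
  ring

lemma act_s_act_s (i : Fin n) (x : Fin n → ℤ) : c.act (c.s i) (c.act (c.s i) x) = x := by
  rw [c.act_s i (c.act _ x), pair_act_s_sroot, act_s]
  simp

lemma cor_act_s (i : Fin n) {β : Fin n → ℤ} (hβ : β ∈ c.R) :
    c.cor (c.act (c.s i) β) = c.cor β - c.pair (c.sroot i) (c.cor β) • c.sroot i := by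
  rw [s, c.cor_act_σ (c.sroot_mem i) hβ, cor_sroot]

/-- The set `R^+` of positive roots, as the roots whose coordinates in the simple roots are
nonnegative. -/
def posRoots : Finset (Fin n → ℤ) := c.R.filter fun β => ∀ i, 0 ≤ β i

variable {c} in
lemma mem_posRoots {β : Fin n → ℤ} : β ∈ c.posRoots ↔ β ∈ c.R ∧ ∀ i, 0 ≤ β i :=
  Finset.mem_filter

lemma sroot_mem_posRoots (i : Fin n) : c.sroot i ∈ c.posRoots :=
  mem_posRoots.2 ⟨c.sroot_mem i, (Pi.single_nonneg (α := fun _ => ℤ)).2 zero_le_one⟩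

lemma exists_ne_pos_of_ne_sroot {i : Fin n} {β : Fin n → ℤ} (hβ : β ∈ c.posRoots)
    (hne : β ≠ c.sroot i) : ∃ j ≠ i, 0 < β j := by
  obtain ⟨hβR, hpos⟩ := mem_posRoots.1 hβ
  by_contra! hle
  have hmul : β = β i • c.sroot i := by
    ext j
    obtain rfl | hj := eq_or_ne j i
    · simp [sroot]
    · simpa [sroot, hj] using (hle j hj).antisymm (hpos j)
  rcases c.reduced _ (c.sroot_mem i) (β i) (hmul ▸ hβR) with h | h
  · exact hne (by rwa [h, one_smul] at hmul)
  · linarith [hpos i]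

lemma act_s_mem_posRoots_erase {i : Fin n} {β : Fin n → ℤ}
    (hβ : β ∈ c.posRoots.erase (c.sroot i)) :
    c.act (c.s i) β ∈ c.posRoots.erase (c.sroot i) := by
  obtain ⟨hne, hβ⟩ := Finset.mem_erase.1 hβ
  -- `s_i` only changes the `i`-th coordinate, so another positive coordinate survives.
  obtain ⟨j, hji, hj⟩ := c.exists_ne_pos_of_ne_sroot hβ hne
  rw [← c.act_s_apply_of_ne hji β] at hj
  have hmem : c.act (c.s i) β ∈ c.R := c.act_mem _ _ (mem_posRoots.1 hβ).1
  refine Finset.mem_erase.2 ⟨fun h => ?_, mem_posRoots.2 ⟨hmem, ?_⟩⟩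
  · simp [h, sroot, hji] at hj
  · exact (c.pos_or_neg _ hmem).resolve_right fun hneg => (hneg j).not_gt hj

lemma exists_pair_sroot_cor_pos {β : Fin n → ℤ} (hβ : β ∈ c.posRoots) :
    ∃ i, 0 < c.pair (c.sroot i) (c.cor β) := by
  obtain ⟨hβR, hpos⟩ := mem_posRoots.1 hβ
  have hsum : 0 < ∑ i, β i * c.pair (c.sroot i) (c.cor β) := by
    rw [← pair_eq_sum_mul_pair_sroot, c.pair_cor_self hβR]
    exact two_pos
  by_contra! hle
  exact hsum.not_ge <| Finset.sum_nonpos fun i _ =>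
    mul_nonpos_of_nonneg_of_nonpos (hpos i) (hle i)

lemma pairTwoRho_eq_sum_posRoots (l : Fin n → ℤ) :
    c.pairTwoRho l = ∑ β ∈ c.posRoots, c.pair β l :=
  (Finset.sum_filter _ _).symm

lemma pairTwoRho_sub (l m : Fin n → ℤ) :
    c.pairTwoRho (l - m) = c.pairTwoRho l - c.pairTwoRho m := by
  simp only [pairTwoRho_eq_sum_posRoots, pair_sub_right, Finset.sum_sub_distrib]

lemma pairTwoRho_smul (k : ℤ) (l : Fin n → ℤ) : c.pairTwoRho (k • l) = k * c.pairTwoRho l := by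
  simp only [pairTwoRho_eq_sum_posRoots, pair_smul_right, Finset.mul_sum]

lemma sum_posRoots_erase_pair_sroot (i : Fin n) :
    ∑ β ∈ c.posRoots.erase (c.sroot i), c.pair β (c.sroot i) = 0 := by
  rw [← self_eq_neg, ← Finset.sum_neg_distrib]
  exact Finset.sum_nbij' (c.act (c.s i)) (c.act (c.s i))
    (fun _ => c.act_s_mem_posRoots_erase) (fun _ => c.act_s_mem_posRoots_erase)
    (fun β _ => c.act_s_act_s i β) (fun β _ => c.act_s_act_s i β)
    (fun β _ => by rw [pair_act_s_sroot, neg_neg])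

lemma pairTwoRho_sroot (i : Fin n) : c.pairTwoRho (c.sroot i) = 2 := by
  rw [pairTwoRho_eq_sum_posRoots, ← Finset.add_sum_erase _ _ (c.sroot_mem_posRoots i),
    sum_posRoots_erase_pair_sroot, pair_sroot_self, add_zero]

lemma pairTwoRho_cor_act_s (i : Fin n) {β : Fin n → ℤ} (hβ : β ∈ c.R) :
    c.pairTwoRho (c.cor (c.act (c.s i) β)) =
      c.pairTwoRho (c.cor β) - 2 * c.pair (c.sroot i) (c.cor β) := by
  rw [c.cor_act_s i hβ, pairTwoRho_sub, pairTwoRho_smul, pairTwoRho_sroot, mul_comm]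

lemma posRoots_induction {P : (Fin n → ℤ) → Prop} (sroot : ∀ i, P (c.sroot i))
    (act_s : ∀ i, ∀ β ∈ c.posRoots, 0 < c.pair (c.sroot i) (c.cor β) →
      P (c.act (c.s i) β) → P β)
    {γ : Fin n → ℤ} (hγ : γ ∈ c.posRoots) : P γ := by
  classical
  by_contra hP
  obtain ⟨β, hβ, hmin⟩ := (c.posRoots.filter (¬ P ·)).exists_min_image
    (fun β => c.pairTwoRho (c.cor β)) ⟨γ, Finset.mem_filter.2 ⟨hγ, hP⟩⟩
  obtain ⟨hβpos, hβP⟩ := Finset.mem_filter.1 hβ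
  obtain ⟨i, hi⟩ := c.exists_pair_sroot_cor_pos hβpos
  have hne : β ≠ c.sroot i := fun h => hβP (h ▸ sroot i)
  have hpos' : c.act (c.s i) β ∈ c.posRoots :=
    Finset.mem_of_mem_erase (c.act_s_mem_posRoots_erase (Finset.mem_erase.2 ⟨hne, hβpos⟩))
  have hle := hmin _ (Finset.mem_filter.2 ⟨hpos', fun h => hβP (act_s i β hβpos hi h)⟩)
  have hlt := c.pairTwoRho_cor_act_s i (mem_posRoots.1 hβpos).1
  linarith

lemma len_prod_map_s_le (l : List (Fin n)) : c.len (l.map c.s).prod ≤ l.length :=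
  Nat.sInf_le ⟨l, rfl, rfl⟩

lemma exists_length_eq_len (w : c.W) :
    ∃ l : List (Fin n), l.length = c.len w ∧ (l.map c.s).prod = w :=
  have ⟨l, hl⟩ := c.generated w
  Nat.sInf_mem (s := {k | ∃ l : List (Fin n), l.length = k ∧ (l.map c.s).prod = w})
    ⟨l.length, l, rfl, hl.symm⟩

lemma len_mul_le (w w' : c.W) : c.len (w * w') ≤ c.len w + c.len w' := by
  obtain ⟨l, hl, rfl⟩ := c.exists_length_eq_len w
  obtain ⟨l', hl', rfl⟩ := c.exists_length_eq_len w'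
  rw [← hl, ← hl', ← List.length_append, ← List.prod_append, ← List.map_append]
  exact c.len_prod_map_s_le (l ++ l')

lemma len_s_le_one (i : Fin n) : c.len (c.s i) ≤ 1 := by
  simpa using c.len_prod_map_s_le [i]

lemma s_inv (i : Fin n) : (c.s i)⁻¹ = c.s i :=
  inv_eq_of_mul_eq_one_left (c.refl_sq _ (c.sroot_mem i))

lemma len_σ_le_len_σ_act_s_add_two (i : Fin n) {β : Fin n → ℤ} (hβ : β ∈ c.R) :
    c.len (c.σ β) ≤ c.len (c.σ (c.act (c.s i) β)) + 2 := by
  set β' := c.act (c.s i) β with hβ'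
  have hconj : c.σ β = c.s i * c.σ β' * c.s i := by
    rw [← c.act_s_act_s i β, ← hβ', c.refl_act _ _ (c.act_mem _ _ hβ)]
    exact congrArg (c.s i * c.σ β' * ·) (c.s_inv i)
  calc
    c.len (c.σ β) = c.len (c.s i * c.σ β' * c.s i) := by rw [hconj]
    _ ≤ c.len (c.s i * c.σ β') + c.len (c.s i) := c.len_mul_le _ _
    _ ≤ c.len (c.s i) + c.len (c.σ β') + c.len (c.s i) := by gcongr; exact c.len_mul_le _ _
    _ ≤ c.len (c.σ β') + 2 := by linarith [c.len_s_le_one i]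

end RootSystemData

/-- For every positive root `γ`, `ℓ(s_γ) ≤ ⟨2ρ, γ^∨⟩ - 1`. -/
theorem reflection_length_le {n : ℕ} (c : RootSystemData n)
    (γ : Fin n → ℤ) (hγR : γ ∈ c.R) (hγpos : ∀ i, 0 ≤ γ i) :
    (c.len (c.σ γ) : ℤ) ≤ c.pairTwoRho (c.cor γ) - 1 := by
  refine c.posRoots_induction (P := fun β => (c.len (c.σ β) : ℤ) ≤ c.pairTwoRho (c.cor β) - 1)
    (fun i => ?sroot) (fun i β hβ hi ih => ?act_s) (RootSystemData.mem_posRoots.2 ⟨hγR, hγpos⟩)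
  case sroot =>
    have hlen : c.len (c.σ (c.sroot i)) ≤ 1 := c.len_s_le_one i
    rw [c.cor_sroot, c.pairTwoRho_sroot]
    lia
  case act_s =>
    have hβR : β ∈ c.R := (RootSystemData.mem_posRoots.1 hβ).1
    calc
      (c.len (c.σ β) : ℤ) ≤ c.len (c.σ (c.act (c.s i) β)) + 2 :=
        mod_cast c.len_σ_le_len_σ_act_s_add_two i hβR
      _ ≤ c.pairTwoRho (c.cor (c.act (c.s i) β)) - 1 + 2 := by gcongr
      _ = c.pairTwoRho (c.cor β) - 2 * c.pair (c.sroot i) (c.cor β) - 1 + 2 := by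
        rw [c.pairTwoRho_cor_act_s i hβR]
      _ ≤ c.pairTwoRho (c.cor β) - 1 := by linarith
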